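/- arXiv:1408.2095 — 8 statements merged into one kernel-verified Lean document; each statement's English description precedes it below -/
import Mathlib

section
/- Let F be a finite field with q elements and let i be a positive integer coprime to q. Let k be the multiplicative order of q modulo i (the order of the unit (q : ZMod i) in (ZMod i)ˣ). Then the i-th cyclotomic polynomial over F is squarefree and factors as a product of exactly φ(i)/k pairwise distinct monic irreducible polynomials, each of degree k, where φ is Euler's totient function. -/
/-!
Since `i` is invertible in `F`, the polynomial `X ^ i - 1` is separable, so its divisor `Φ_i` is
squarefree. A root `ζ` of an irreducible factor of `Φ_i` is a primitive `i`-th root of unity, and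
its conjugates are `ζ, ζ ^ q, ζ ^ (q ^ 2), …`; hence the degree of that factor is the order of `q`
modulo `i`. Comparing degrees in the factorization counts the factors.
-/

open Polynomial UniqueFactorizationMonoid

theorem isUnit_natCast_of_coprime_card {R : Type*} [CommRing R] [Fintype R] {n : ℕ}
    (hn : (Fintype.card R).Coprime n) : IsUnit (n : R) := by
  have hcoprime : IsCoprime (Fintype.card R : R) (n : R) := hn.cast
  rwa [Nat.cast_card_eq_zero, isCoprime_zero_left] at hcoprime

theorem prod_primeFactors_eq_normalize {M : Type*} [CommMonoidWithZero M]
    [StrongNormalizationMonoid M] [UniqueFactorizationMonoid M] {a : M} (ha : IsRadical a)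
    (ha₀ : a ≠ 0) : ∏ p ∈ primeFactors a, p = normalize a := by
  rw [← Finset.prod_map_val, Multiset.map_id', primeFactors_val_eq_normalizedFactors ha,
    prod_normalizedFactors_eq ha₀]

section FiniteField

variable {K : Type*} [Field K] [Fintype K] {n : ℕ}

theorem squarefree_cyclotomic_of_coprime_card (hn : (Fintype.card K).Coprime n) :
    Squarefree (cyclotomic n K) :=
  have : NeZero (n : K) := ⟨(isUnit_natCast_of_coprime_card hn).ne_zero⟩
  squarefree_cyclotomic n K

theorem exists_prime_pow_eq_card_of_coprime_card (hn : (Fintype.card K).Coprime n) :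
    ∃ p f : ℕ, p.Prime ∧ Fintype.card K = p ^ f ∧ p.Coprime n := by
  obtain ⟨p, _, f, hp, hcard⟩ := FiniteField.card' K
  exact ⟨p, f, hp, hcard, (Nat.coprime_pow_left_iff f.pos p n).mp (hcard ▸ hn)⟩

theorem natDegree_of_irreducible_of_dvd_cyclotomic {P : K[X]} (hn : (Fintype.card K).Coprime n)
    (hP : Irreducible P) (hdvd : P ∣ cyclotomic n K) :
    P.natDegree = orderOf (ZMod.unitOfCoprime (Fintype.card K) hn) := by
  obtain ⟨p, f, hp, hcard, hpn⟩ := exists_prime_pow_eq_card_of_coprime_card hn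
  have : Fact p.Prime := ⟨hp⟩
  simpa only [hcard] using natDegree_of_dvd_cyclotomic_of_irreducible hcard hpn hdvd hP

theorem card_primeFactors_cyclotomic [DecidableEq K] (hn : (Fintype.card K).Coprime n) :
    (primeFactors (cyclotomic n K)).card =
      n.totient / orderOf (ZMod.unitOfCoprime (Fintype.card K) hn) := by
  obtain ⟨p, f, hp, hcard, hpn⟩ := exists_prime_pow_eq_card_of_coprime_card hn
  have : Fact p.Prime := ⟨hp⟩
  simpa only [hcard, toFinset_normalizedFactors] using normalizedFactors_cyclotomic_card hcard hpn

end FiniteField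

/-- Let `F` be a finite field with `q` elements and `i` a positive integer coprime to `q`.
Let `k` be the multiplicative order of `q` modulo `i`. Then the `i`-th cyclotomic polynomial
over `F` is squarefree and is the product of exactly `φ(i)/k` pairwise distinct monic
irreducible polynomials, each of degree `k`. -/
theorem stmt_1 (F : Type*) [Field F] [Fintype F] (q i : ℕ) (hF : Fintype.card F = q)
    (hi : 0 < i) (hcop : Nat.Coprime q i)
    (k : ℕ) (hk : k = orderOf (ZMod.unitOfCoprime q hcop : (ZMod i)ˣ)) :
    Squarefree (Polynomial.cyclotomic i F) ∧
      ∃ s : Finset (Polynomial F), s.card = Nat.totient i / k ∧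
        (∀ P ∈ s, P.Monic ∧ Irreducible P ∧ P.natDegree = k) ∧
        Polynomial.cyclotomic i F = ∏ P ∈ s, P := by
  classical
  subst hF hk
  have hsq := squarefree_cyclotomic_of_coprime_card hcop
  have hne := cyclotomic_ne_zero i F
  refine ⟨hsq, primeFactors (cyclotomic i F), card_primeFactors_cyclotomic hcop,
    fun P hP ↦ ?_, ?_⟩
  · rw [mem_primeFactors, Polynomial.mem_normalizedFactors_iff hne] at hP
    obtain ⟨hirr, hmonic, hdvd⟩ := hP
    exact ⟨hmonic, hirr, natDegree_of_irreducible_of_dvd_cyclotomic hcop hirr hdvd⟩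
  · rw [prod_primeFactors_eq_normalize hsq.isRadical hne,
      (cyclotomic.monic i F).normalize_eq_self]
end

section
/- Let K be a field, let m be a natural number, and let σ be a permutation of Fin m. Then the characteristic polynomial of the m × m permutation matrix of σ over K equals (X − 1)^(m − s) · ∏_{c ∈ cycleType σ} (X^c − 1), where s is the cardinality of the support of σ (the set of points moved by σ) and cycleType σ is the multiset of lengths (each ≥ 2) of the nontrivial cycles of σ. -/
/-!
If `A` and `B` are the matrices of disjoint permutations, every index is fixed by one of the two,
so `(1 - A) * (1 - B) = 0`. This is equivalent to
`(X - A) * (X - B) = (X - 1) • (X - A * B)`, hence up to a power of the regular element `X - 1`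
the characteristic polynomial is multiplicative on disjoint products, and it suffices to treat a
single cycle `σ`. There, only `1` and `σ` contribute to the Leibniz expansion of the determinant:
if `τ i ∈ {i, σ i}` for all `i`, then `τ` and `τ⁻¹ * σ` are disjoint with product the cycle `σ`, so
one of them is trivial.
-/

open Equiv Polynomial

section Perm

variable {n : Type*}

theorem eq_one_or_eq_one_of_disjoint_of_isCycle_mul [Finite n] {σ τ : Perm n} (h : σ.Disjoint τ)
    (hστ : (σ * τ).IsCycle) : σ = 1 ∨ τ = 1 := by
  classical
  have := Fintype.ofFinite n
  have hcard : σ.cycleType.card + τ.cycleType.card = 1 := by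
    rw [← Multiset.card_add, ← h.cycleType_mul, Perm.card_cycleType_eq_one.mpr hστ]
  rw [← Perm.card_cycleType_eq_zero, ← Perm.card_cycleType_eq_zero]
  lia

theorem eq_one_or_eq_of_isCycle_of_forall [Finite n] {σ τ : Perm n} (hσ : σ.IsCycle)
    (h : ∀ i, τ i = i ∨ τ i = σ i) : τ = 1 ∨ τ = σ := by
  have hdisj : τ.Disjoint (τ⁻¹ * σ) := fun i ↦
    (h i).imp_right fun hi ↦ by rw [Perm.mul_apply, ← hi, Perm.inv_eq_iff_eq]
  have hcycle : (τ * (τ⁻¹ * σ)).IsCycle := by rwa [mul_inv_cancel_left]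
  exact (eq_one_or_eq_one_of_disjoint_of_isCycle_mul hdisj hcycle).imp_right inv_mul_eq_one.mp

theorem prod_ite_apply_eq_self [Fintype n] [DecidableEq n] {M : Type*} [CommMonoid M]
    (σ : Perm n) (a b : M) :
    ∏ i, (if σ i = i then a else b) =
      a ^ (Fintype.card n - σ.support.card) * b ^ σ.support.card := by
  have hfixed : Finset.univ.filter (fun i ↦ σ i = i) = σ.supportᶜ := by
    ext i
    simp
  rw [Finset.prod_ite, Finset.prod_const, Finset.prod_const, hfixed, Finset.card_compl,
    Perm.support]

end Perm

section PermMatrix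

variable {n R : Type*} [DecidableEq n]

theorem permMatrix_apply [Zero R] [One R] (σ : Perm n) (i j : n) :
    σ.permMatrix R i j = if σ i = j then 1 else 0 := by
  simp [PEquiv.toMatrix_apply, eq_comm]

theorem permMatrix_add_permMatrix_of_disjoint [AddCommMonoidWithOne R] {σ τ : Perm n}
    (h : σ.Disjoint τ) :
    σ.permMatrix R + τ.permMatrix R = 1 + (σ * τ).permMatrix R := by
  ext i j
  simp only [Matrix.add_apply, permMatrix_apply, Matrix.one_apply]
  rcases h i with hσi | hτi
  · rw [h.commute.eq, Perm.mul_apply, hσi]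
  · rw [Perm.mul_apply, hτi, add_comm]

theorem one_sub_permMatrix_mul_one_sub_permMatrix_of_disjoint [Fintype n] [Ring R]
    {σ τ : Perm n} (h : σ.Disjoint τ) :
    (1 - σ.permMatrix R) * (1 - τ.permMatrix R) = 0 := by
  have hadd := permMatrix_add_permMatrix_of_disjoint (R := R) h
  rw [h.commute.eq, Matrix.permMatrix_mul] at hadd
  calc (1 - σ.permMatrix R) * (1 - τ.permMatrix R)
    _ = 1 + σ.permMatrix R * τ.permMatrix R - (σ.permMatrix R + τ.permMatrix R) := by
      noncomm_ring
    _ = 0 := by rw [hadd, sub_self]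

end PermMatrix

section Charpoly

variable {n R : Type*} [Fintype n] [DecidableEq n] [CommRing R]

theorem charmatrix_mul_charmatrix_of_one_sub_mul_one_sub_eq_zero {A B : Matrix n n R}
    (h : (1 - A) * (1 - B) = 0) :
    A.charmatrix * B.charmatrix = (X - 1 : R[X]) • (A * B).charmatrix := by
  have hdiff : A.charmatrix * B.charmatrix - (X - 1 : R[X]) • (A * B).charmatrix =
      (X : R[X]) • (C : R →+* R[X]).mapMatrix ((1 - A) * (1 - B)) := by
    simp only [Matrix.charmatrix, Matrix.scalar_apply, ← Matrix.smul_one_eq_diagonal, map_mul,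
      map_sub, map_one, sub_mul, mul_sub, smul_mul_assoc, mul_smul_comm, one_mul, mul_one]
    module
  rwa [h, map_zero, smul_zero, sub_eq_zero] at hdiff

theorem charpoly_mul_charpoly_of_one_sub_mul_one_sub_eq_zero {A B : Matrix n n R}
    (h : (1 - A) * (1 - B) = 0) :
    A.charpoly * B.charpoly = (X - 1) ^ Fintype.card n * (A * B).charpoly := by
  simp only [Matrix.charpoly]
  rw [← Matrix.det_mul, charmatrix_mul_charmatrix_of_one_sub_mul_one_sub_eq_zero h,
    Matrix.det_smul]

theorem charpoly_permMatrix_mul_of_disjoint {σ τ : Perm n} (h : σ.Disjoint τ) :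
    (X - 1) ^ Fintype.card n * ((σ * τ).permMatrix R).charpoly =
      (σ.permMatrix R).charpoly * (τ.permMatrix R).charpoly := by
  rw [charpoly_mul_charpoly_of_one_sub_mul_one_sub_eq_zero
    (one_sub_permMatrix_mul_one_sub_permMatrix_of_disjoint h), ← Matrix.permMatrix_mul,
    h.commute.eq]

theorem det_eq_prod_diag_add_of_isCycle {σ : Perm n} (hσ : σ.IsCycle) {M : Matrix n n R}
    (hM : ∀ i j, j ≠ i → j ≠ σ i → M i j = 0) :
    M.det = ∏ i, M i i + Perm.sign σ * ∏ i, M i (σ i) := by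
  rw [← Matrix.det_transpose, Matrix.det_apply',
    Finset.sum_eq_add_of_mem 1 σ (Finset.mem_univ _) (Finset.mem_univ _) hσ.ne_one.symm]
  · simp
  · rintro τ - ⟨hτ_ne_one, hτ_ne_σ⟩
    obtain ⟨i, hi, hiσ⟩ : ∃ i, τ i ≠ i ∧ τ i ≠ σ i := by
      by_contra! h
      exact (eq_one_or_eq_of_isCycle_of_forall hσ
        fun i ↦ or_iff_not_imp_left.mpr (h i)).elim hτ_ne_one hτ_ne_σ
    rw [Finset.prod_eq_zero (Finset.mem_univ i) (hM i (τ i) hi hiσ), mul_zero]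

theorem charmatrix_permMatrix_apply (σ : Perm n) (i j : n) :
    (σ.permMatrix R).charmatrix i j =
      (if i = j then X else 0) - (if σ i = j then 1 else 0) := by
  rw [Matrix.charmatrix_apply, Matrix.diagonal_apply, permMatrix_apply, apply_ite C, C_1, C_0]

theorem charpoly_permMatrix_of_isCycle {σ : Perm n} (hσ : σ.IsCycle) :
    (σ.permMatrix R).charpoly =
      (X - 1) ^ (Fintype.card n - σ.support.card) * (X ^ σ.support.card - 1) := by
  have hzero (i j : n) (hji : j ≠ i) (hjσ : j ≠ σ i) : (σ.permMatrix R).charmatrix i j = 0 := by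
    rw [charmatrix_permMatrix_apply, if_neg hji.symm, if_neg hjσ.symm, sub_zero]
  have hdiag (i : n) :
      (σ.permMatrix R).charmatrix i i = if σ i = i then X - 1 else X := by
    rw [charmatrix_permMatrix_apply, if_pos rfl, sub_ite, sub_zero]
  have hcycle (i : n) :
      (σ.permMatrix R).charmatrix i (σ i) = if σ i = i then X - 1 else -1 := by
    simp only [charmatrix_permMatrix_apply, if_true, eq_comm (a := i), ite_sub, zero_sub]
  have hsign : (-1 : R[X]) ^ σ.support.card * (-1) ^ σ.support.card = 1 := by
    rw [← mul_pow, neg_one_mul, neg_neg, one_pow]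
  rw [Matrix.charpoly, det_eq_prod_diag_add_of_isCycle hσ hzero]
  simp only [hdiag, hcycle, prod_ite_apply_eq_self, hσ.sign]
  push_cast
  linear_combination (-(X - 1) ^ (Fintype.card n - σ.support.card)) * hsign

theorem charpoly_permMatrix (σ : Perm n) :
    (σ.permMatrix R).charpoly =
      (X - 1) ^ (Fintype.card n - σ.support.card) *
        (σ.cycleType.map fun c ↦ X ^ c - 1).prod := by
  induction σ using Perm.cycle_induction_on with
  | base_one => simp [Matrix.charpoly_one]
  | base_cycles σ hσ => simp [charpoly_permMatrix_of_isCycle hσ, hσ.cycleType]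
  | induction_disjoint σ τ h _ ihσ ihτ =>
    have hreg : IsLeftRegular ((X - 1 : R[X]) ^ Fintype.card n) :=
      ((monic_X_sub_C (1 : R)).pow (Fintype.card n)).isRegular.left
    have hexp : Fintype.card n - σ.support.card + (Fintype.card n - τ.support.card) =
        Fintype.card n + (Fintype.card n - (σ * τ).support.card) := by
      have hcard : (σ * τ).support.card ≤ Fintype.card n := Finset.card_le_univ _
      rw [h.card_support_mul] at hcard ⊢
      lia
    refine hreg ?_
    calc (X - 1) ^ Fintype.card n * ((σ * τ).permMatrix R).charpoly
      _ = (X - 1) ^ (Fintype.card n - σ.support.card + (Fintype.card n - τ.support.card)) *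
            ((σ.cycleType.map fun c ↦ X ^ c - 1).prod *
              (τ.cycleType.map fun c ↦ X ^ c - 1).prod) := by
        rw [charpoly_permMatrix_mul_of_disjoint h, ihσ, ihτ, pow_add, mul_mul_mul_comm]
      _ = (X - 1) ^ Fintype.card n * ((X - 1) ^ (Fintype.card n - (σ * τ).support.card) *
            ((σ * τ).cycleType.map fun c ↦ X ^ c - 1).prod) := by
        rw [hexp, pow_add, mul_assoc, h.cycleType_mul, Multiset.map_add, Multiset.prod_add]

end Charpoly

theorem stmt_2_general {n : Type*} [Fintype n] [DecidableEq n] (R : Type*) [CommRing R]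
    (σ : Perm n) :
    (Matrix.of fun i j : n => if σ j = i then (1 : R) else 0).charpoly =
      (X - 1) ^ (Fintype.card n - σ.support.card) *
        (σ.cycleType.map fun c => X ^ c - 1).prod := by
  have htranspose : (Matrix.of fun i j : n => if σ j = i then (1 : R) else 0) =
      (σ.permMatrix R).transpose := by
    ext i j
    rw [Matrix.transpose_apply, permMatrix_apply, Matrix.of_apply]
  rw [htranspose, Matrix.charpoly_transpose, charpoly_permMatrix]

/-- Over a field `K`, the characteristic polynomial of the `m × m` permutation matrix of a
permutation `σ` of `Fin m` (the matrix whose `(i, j)` entry is `1` if `σ j = i` and `0`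
otherwise) equals `(X − 1)^(m − s) · ∏_{c ∈ cycleType σ} (X^c − 1)`, where `s` is the
cardinality of the support of `σ`. -/
theorem stmt_2 (K : Type*) [Field K] (m : ℕ) (σ : Equiv.Perm (Fin m)) :
    (Matrix.of fun i j : Fin m => if σ j = i then (1 : K) else 0).charpoly =
      (Polynomial.X - 1) ^ (m - σ.support.card) *
        (σ.cycleType.map fun c => Polynomial.X ^ c - 1).prod := by
  rw [stmt_2_general, Fintype.card_fin]
end

section
/- Let K be a field (or commutative ring), let m be a positive integer, let σ be the m-cycle on Fin m defined by σ(i) = i + 1 (mod m), and let d : Fin m → K. Let M be the m × m matrix with M i j = d i if j = σ i and M i j = 0 otherwise. Then the characteristic polynomial of M is X^m − ∏_{i} d i. -/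
/-! In the Leibniz expansion of a determinant whose `i`-th row is supported on the columns `i` and
`σ i`, only permutations `τ` with `τ i ∈ {i, σ i}` for all `i` contribute. When `σ` is a single
cycle, bijectivity of `τ` makes `{i | τ i = σ i}` stable under `σ`, so it is empty or everything.
Hence just two terms survive, `τ = 1` and `τ = σ`, and for the characteristic matrix the sign of
`σ` turns the product of the off-diagonal entries `-d i` into `-∏ i, d i`. -/

open Equiv Matrix

section Cycle

open scoped Pointwise

variable {α : Type*} {σ τ : Perm α}

lemma eq_one_or_eq_of_isCycleOn_univ (hσ : σ.IsCycleOn Set.univ)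
    (hτ : ∀ i, τ i = i ∨ τ i = σ i) : τ = 1 ∨ τ = σ := by
  rcases subsingleton_or_nontrivial α with _ | _
  · exact .inl (Subsingleton.elim _ _)
  have moves (i : α) : σ i ≠ i := hσ.apply_ne Set.nontrivial_univ (Set.mem_univ i)
  have agree_iff (i : α) : τ (σ i) = σ (σ i) ↔ τ i = σ i := by
    constructor <;> intro h
    · obtain ⟨j, hj⟩ := τ.surjective (σ i)
      rcases hτ j with hfix | hmove
      · obtain rfl : j = σ i := hfix.symm.trans hj
        exact absurd (h.symm.trans hj) (moves (σ i))
      · obtain rfl : j = i := σ.injective (hmove.symm.trans hj)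
        exact hj
    · exact (hτ (σ i)).resolve_left fun hfix ↦ moves i (τ.injective (hfix.trans h.symm))
  have stable : σ ∈ MulAction.stabilizer (Perm α) {i | τ i = σ i} :=
    MulAction.mem_stabilizer_set.2 agree_iff
  by_cases hne : ∃ i, τ i = σ i
  · obtain ⟨i, hi⟩ := hne
    refine .inr (Perm.ext fun j ↦ ?_)
    obtain ⟨k, rfl⟩ := hσ.2 (Set.mem_univ i) (Set.mem_univ j)
    exact (MulAction.mem_stabilizer_set.1 (zpow_mem stable k) i).2 hi
  · exact .inl (Perm.ext fun i ↦ (hτ i).resolve_right fun hi ↦ hne ⟨i, hi⟩)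

lemma sign_of_isCycleOn_univ [Fintype α] [DecidableEq α] [Nontrivial α]
    (hσ : σ.IsCycleOn Set.univ) : Perm.sign σ = -(-1) ^ Fintype.card α := by
  have moves (i : α) : σ i ≠ i := hσ.apply_ne Set.nontrivial_univ (Set.mem_univ i)
  have hcycle : σ.IsCycle :=
    Perm.isCycle_iff_exists_isCycleOn.2 ⟨_, Set.nontrivial_univ, hσ, fun _ _ ↦ Set.mem_univ _⟩
  have hsupport : σ.support = Finset.univ := by ext i; simp [moves i]
  rw [hcycle.sign, hsupport, Finset.card_univ]

lemma isCycleOn_univ_finRotate (n : ℕ) : (finRotate n).IsCycleOn Set.univ := by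
  refine ⟨Set.bijOn_univ.2 (finRotate n).bijective, fun i _ j _ ↦ ?_⟩
  have := i.neZero
  refine ⟨(j - i : Fin n).val, ?_⟩
  rw [zpow_natCast, ← Perm.iterate_eq_pow, ← finCycle_eq_finRotate_iterate, finCycle_apply,
    add_sub_cancel]

end Cycle

section Determinant

variable {n R : Type*} [Fintype n] [DecidableEq n] [CommRing R] {σ : Perm n}

lemma det_eq_prod_diag_add_sign_mul_prod [Nontrivial n] (hσ : σ.IsCycleOn Set.univ)
    {A : Matrix n n R} (hA : ∀ i j, j ≠ i → j ≠ σ i → A i j = 0) :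
    A.det = ∏ i, A i i + Perm.sign σ * ∏ i, A i (σ i) := by
  have hne : (1 : Perm n) ≠ σ := by
    rintro rfl
    exact Set.not_subsingleton_iff.2 Set.nontrivial_univ (Perm.isCycleOn_one.1 hσ)
  have vanish (τ : Perm n) (h : τ ≠ 1 ∧ τ ≠ σ) :
      (Perm.sign τ : R) * ∏ i, A i (τ i) = 0 := by
    obtain ⟨i, hi⟩ : ∃ i, ¬(τ i = i ∨ τ i = σ i) := by
      by_contra! hτ
      exact (eq_one_or_eq_of_isCycleOn_univ hσ hτ).elim h.1 h.2
    rw [not_or] at hi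
    rw [Finset.prod_eq_zero (Finset.mem_univ i) (hA i (τ i) hi.1 hi.2), mul_zero]
  rw [← det_transpose, det_apply']
  simp only [transpose_apply]
  rw [Fintype.sum_eq_add 1 σ hne vanish]
  simp

lemma diagonal_mul_permMatrix (d : n → R) (σ : Perm n) :
    diagonal d * σ.permMatrix R = of fun i j ↦ if j = σ i then d i else 0 := by
  ext i j
  simp [eq_comm]

lemma det_diagonal_sub_diagonal_mul_permMatrix [Nonempty n] (hσ : σ.IsCycleOn Set.univ)
    (a d : n → R) :
    (diagonal a - diagonal d * σ.permMatrix R).det = ∏ i, a i - ∏ i, d i := by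
  rw [diagonal_mul_permMatrix]
  rcases subsingleton_or_nontrivial n with _ | _
  · obtain ⟨i⟩ := ‹Nonempty n›
    obtain rfl : σ = 1 := Subsingleton.elim _ _
    simp [det_eq_elem_of_subsingleton _ i, Fintype.prod_subsingleton _ i]
  have moves (i : n) : σ i ≠ i := hσ.apply_ne Set.nontrivial_univ (Set.mem_univ i)
  have signs_cancel : (-1 : R) ^ Fintype.card n * (-1) ^ Fintype.card n = 1 := by
    rw [← mul_pow, neg_one_mul, neg_neg, one_pow]
  calc
    _ = ∏ i, a i + Perm.sign σ * ∏ i, -d i := by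
      rw [det_eq_prod_diag_add_sign_mul_prod hσ fun i j hi hσi ↦ by simp [hi.symm, hσi]]
      simp [(moves _).symm]
    _ = ∏ i, a i - ((-1) ^ Fintype.card n * (-1) ^ Fintype.card n) * ∏ i, d i := by
      rw [sign_of_isCycleOn_univ hσ, Finset.prod_neg, Finset.card_univ]
      push_cast
      ring
    _ = ∏ i, a i - ∏ i, d i := by rw [signs_cancel, one_mul]

lemma charmatrix_diagonal_mul_permMatrix (d : n → R) (σ : Perm n) :
    (diagonal d * σ.permMatrix R).charmatrix =
      diagonal (fun _ ↦ Polynomial.X) -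
        diagonal (fun i ↦ Polynomial.C (d i)) * σ.permMatrix (Polynomial R) := by
  ext1 i j
  simp only [diagonal_mul_permMatrix, charmatrix_apply, Matrix.sub_apply, of_apply,
    apply_ite Polynomial.C, map_zero]

theorem stmt_3_general [Nonempty n] (hσ : σ.IsCycleOn Set.univ) (d : n → R) :
    (diagonal d * σ.permMatrix R).charpoly =
      Polynomial.X ^ Fintype.card n - Polynomial.C (∏ i, d i) := by
  rw [charpoly, charmatrix_diagonal_mul_permMatrix, det_diagonal_sub_diagonal_mul_permMatrix hσ,
    Finset.prod_const, Finset.card_univ, map_prod]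

end Determinant

/-- Let `K` be a commutative ring, `m` a positive integer, `σ` the `m`-cycle
`i ↦ i + 1 (mod m)` on `Fin m`, and `d : Fin m → K`. The matrix `M` with
`M i j = d i` if `j = σ i` and `0` otherwise has characteristic polynomial
`X^m − ∏ i, d i`. -/
theorem stmt_3 (K : Type*) [CommRing K] (m : ℕ) [NeZero m] (d : Fin m → K) :
    (Matrix.of fun i j : Fin m => if j = i + 1 then d i else 0).charpoly =
      Polynomial.X ^ m - Polynomial.C (∏ i, d i) := by
  simpa [diagonal_mul_permMatrix] using stmt_3_general (isCycleOn_univ_finRotate m) d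
end

section
/- Let K be a field, r ≥ 1 an integer, and f ∈ K[X] a polynomial. Let R₀ = K[x, y]/(y^r − f(x)) and let A be the localization of R₀ away from the image of y, so that y is invertible in A. Let Ω_{A/K} be the module of Kähler differentials of A over K with universal derivation D. Then for all integers i ≥ 1 and j, the identity (j − r) • (x^i · f'(x) · y^{−j} • D(x)) = (r·i) • (x^{i−1} · y^{r−j} • D(x)) − r • D(x^i · y^{r−j}) holds in Ω_{A/K}. In particular, when j − r is invertible in K, the class of x^i f'(x) y^{−j} D(x) modulo exact differentials equals (r·i)/(j − r) times the class of x^{i−1} y^{r−j} D(x). -/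
open Polynomial

/-! Let `ω = dy / y` be the logarithmic differential of `y`. Differentiating `y ^ r = f(x)` gives
`f'(x) dx = r y ^ r ω`, while the Leibniz rule gives
`d(a y ^ (r - j)) = y ^ (r - j) da + (r - j) a y ^ (r - j) ω`. Eliminating `ω` yields a reduction
formula with any `a` in place of `x ^ i`. -/

section

variable {R A M : Type*} [CommRing R] [CommRing A] [Algebra R A] [AddCommGroup M] [Module A M]
  [Module R M] (d : Derivation R A M)

/-- The logarithmic differential `u ↦ u⁻¹ • d u` of a derivation `d`. It turns products of units
into sums, hence the type `Additive Aˣ` of its arguments. -/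
def dlog : Additive Aˣ →+ M :=
  AddMonoidHom.mk' (fun u ↦ u.toMul⁻¹ • d (u.toMul : A)) fun u v ↦ by
    rw [toMul_add, Units.val_mul, d.leibniz, ← Units.smul_def, ← Units.smul_def, smul_add,
      mul_inv, mul_smul, mul_smul, smul_comm _ _ (u.toMul • _), inv_smul_smul, inv_smul_smul,
      add_comm]

theorem derivation_units_eq_smul_dlog (u : Aˣ) : d (u : A) = (u : A) • dlog d (.ofMul u) :=
  (smul_inv_smul u (d (u : A))).symm

theorem derivation_units_zpow_eq_zsmul_dlog (u : Aˣ) (n : ℤ) :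
    d ((u ^ n : Aˣ) : A) = n • ((u ^ n : Aˣ) : A) • dlog d (.ofMul u) := by
  rw [derivation_units_eq_smul_dlog, ofMul_zpow, map_zsmul, smul_comm]

theorem stmt_7_general (x : A) (y : Aˣ) (f : R[X]) (r : ℤ)
    (curve : ((y ^ r : Aˣ) : A) = aeval x f) (a : A) (j : ℤ) :
    (j - r) • ((a * aeval x (derivative f) * ((y ^ (-j) : Aˣ) : A)) • d x) =
      r • (((y ^ (r - j) : Aˣ) : A) • d a) - r • d (a * ((y ^ (r - j) : Aˣ) : A)) := by
  set ω := dlog d (.ofMul y)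
  have d_curve : aeval x (derivative f) • d x = r • ((y ^ r : Aˣ) : A) • ω := by
    rw [← d.map_aeval, ← curve, derivation_units_zpow_eq_zsmul_dlog]
  have zpow_neg_mul : ((y ^ (-j) : Aˣ) : A) * ((y ^ r : Aˣ) : A) = ((y ^ (r - j) : Aˣ) : A) := by
    rw [← Units.val_mul, ← zpow_add, neg_add_eq_sub]
  have lhs_eq : (a * aeval x (derivative f) * ((y ^ (-j) : Aˣ) : A)) • d x =
      r • (a * ((y ^ (r - j) : Aˣ) : A)) • ω := by
    rw [mul_right_comm, mul_smul, d_curve, smul_comm _ r, smul_smul, mul_assoc, zpow_neg_mul]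
  rw [lhs_eq, d.leibniz, derivation_units_zpow_eq_zsmul_dlog]
  module

end

/-- Let `K` be a field, `r ≥ 1`, `f ∈ K[X]`, `R₀ = K[x,y]/(y^r − f(x))` (presented by a
surjection `π` from `K[x][y]` with kernel generated by `y^r − f(x)`; here `y` is the outer
variable `X` and `x` is `C X`), and let `A` be the localization of `R₀` away from the image
of `y`, so that `y` is invertible in `A` (its powers given by a unit `u`). Then in the module
of Kähler differentials `Ω[A⁄K]` with universal derivation `D`, for all integers `i ≥ 1`
and `j`,
`(j − r) • (x^i·f'(x)·y^{−j} • D(x)) = (r·i) • (x^{i−1}·y^{r−j} • D(x)) − r • D(x^i·y^{r−j})`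
(the reduction formula Red1). -/
theorem stmt_7 (K R₀ A : Type*) [Field K] [CommRing R₀] [Algebra K R₀]
    [CommRing A] [Algebra R₀ A] [Algebra K A] [IsScalarTower K R₀ A]
    (r : ℕ) (hr : 1 ≤ r) (f : Polynomial K)
    (π : Polynomial (Polynomial K) →ₐ[K] R₀) (hπ : Function.Surjective π)
    (hker : RingHom.ker (π : Polynomial (Polynomial K) →+* R₀) =
      Ideal.span {(X : Polynomial (Polynomial K)) ^ r - C f})
    [IsLocalization.Away (π (X : Polynomial (Polynomial K))) A]
    (u : Aˣ) (hu : (u : A) = algebraMap R₀ A (π (X : Polynomial (Polynomial K)))) :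
    ∀ (i : ℕ), 1 ≤ i → ∀ (j : ℤ),
      (j - (r : ℤ)) • ((algebraMap R₀ A (π (C (X : Polynomial K))) ^ i *
            algebraMap R₀ A (π (C (derivative f))) * ((u ^ (-j) : Aˣ) : A)) •
          KaehlerDifferential.D K A (algebraMap R₀ A (π (C (X : Polynomial K))))) =
        ((r : ℤ) * (i : ℤ)) • ((algebraMap R₀ A (π (C (X : Polynomial K))) ^ (i - 1) *
              ((u ^ ((r : ℤ) - j) : Aˣ) : A)) •
            KaehlerDifferential.D K A (algebraMap R₀ A (π (C (X : Polynomial K)))))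
          - (r : ℤ) • KaehlerDifferential.D K A
              (algebraMap R₀ A (π (C (X : Polynomial K))) ^ i *
                ((u ^ ((r : ℤ) - j) : Aˣ) : A)) := by
  intro i _ j
  have eval_C (p : K[X]) :
      algebraMap R₀ A (π (C p)) = aeval (algebraMap R₀ A (π (C X))) p :=
    eval_unique (((IsScalarTower.toAlgHom K R₀ A).comp π).comp CAlgHom) p
  have relation : π (X ^ r) = π (C f) :=
    (RingHom.sub_mem_ker_iff (π : K[X][X] →+* R₀)).mp (hker ▸ Ideal.mem_span_singleton_self _)
  have curve : ((u ^ (r : ℤ) : Aˣ) : A) = aeval (algebraMap R₀ A (π (C X))) f := by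
    rw [zpow_natCast, Units.val_pow_eq_pow_val, hu, ← map_pow, ← map_pow, relation, eval_C]
  rw [eval_C (derivative f), stmt_7_general (KaehlerDifferential.D K A) _ u f r curve,
    Derivation.leibniz_pow]
  module
end

section
/- Let K be a field and let f ∈ K[X] be a polynomial of degree d ≥ 1 such that f and its formal derivative f' are coprime (IsCoprime f f'). Then for every polynomial R ∈ K[X] of degree at most 2d − 2, there exist unique polynomials A, B ∈ K[X] with deg A ≤ d − 2 and deg B ≤ d − 1 such that R = A·f + B·f'. -/
/-!
Under the degree bounds, `(B, A) ↦ A * f + B * f'` is the Sylvester map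
`R[X]_d × R[X]_(d - 1) → R[X]_(d + (d - 1))`, whose determinant is a resultant of `f` and `f'`. When
the leading coefficient of `f` is a unit, coprimality makes this resultant a unit, and the adjugate
of the Sylvester matrix then inverts the map.
-/

section Sylvester

open Polynomial

variable {R : Type*} [CommRing R] {f g : R[X]} {m n : ℕ}

theorem sylvesterMap_bijective_of_isUnit_resultant (hf : f.natDegree ≤ m) (hg : g.natDegree ≤ n)
    (hres : IsUnit (f.resultant g m n)) : Function.Bijective (sylvesterMap f g hf hg) := by
  obtain ⟨u, hu⟩ := hres
  have hleft : adjSylvester f g ∘ sylvesterMap f g hf hg = (u • ·) := by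
    rw [← LinearMap.coe_comp, adjSylvester_comp_sylveserMap, ← hu]
    rfl
  have hright : sylvesterMap f g hf hg ∘ adjSylvester f g = (u • ·) := by
    rw [← LinearMap.coe_comp, sylveserMap_comp_adjSylvester, ← hu]
    rfl
  exact ⟨.of_comp (hleft ▸ MulAction.injective u), .of_comp (hright ▸ MulAction.surjective u)⟩

theorem existsUnique_mul_add_mul_of_isUnit_resultant (hf : f.natDegree ≤ m)
    (hg : g.natDegree ≤ n) (hres : IsUnit (f.resultant g m n)) {P : R[X]}
    (hP : P.degree < (m + n : ℕ)) :
    ∃! AB : R[X] × R[X], AB.1.degree < n ∧ AB.2.degree < m ∧ P = AB.1 * f + AB.2 * g := by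
  have hbij := sylvesterMap_bijective_of_isUnit_resultant hf hg hres
  obtain ⟨⟨B, A⟩, hBA, huniq⟩ := hbij.existsUnique ⟨P, mem_degreeLT.mpr hP⟩
  refine ⟨(A, B), ⟨mem_degreeLT.mp A.2, mem_degreeLT.mp B.2, ?_⟩, ?_⟩
  · simpa [mul_comm] using congr($hBA.symm.1)
  · rintro ⟨A', B'⟩ ⟨hA', hB', hP'⟩
    have heq := huniq (⟨B', mem_degreeLT.mpr hB'⟩, ⟨A', mem_degreeLT.mpr hA'⟩)
      (Subtype.ext (by simp only [sylvesterMap_apply_coe, hP', mul_comm]))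
    exact Prod.ext congr($heq.2.1) congr($heq.1.1)

theorem isUnit_resultant_iff_isCoprime_of_isUnit_leadingCoeff (hf : IsUnit f.leadingCoeff) :
    IsUnit (f.resultant g) ↔ IsCoprime f g := by
  obtain ⟨u, hu⟩ := hf
  have hmonic : (C (↑u⁻¹ : R) * f).Monic := monic_C_mul_of_mul_leadingCoeff_eq_one (by simp [← hu])
  have hdeg : (C (↑u⁻¹ : R) * f).natDegree = f.natDegree :=
    natDegree_C_mul_of_isUnit u⁻¹.isUnit f
  have hiff := isUnit_resultant_iff_isCoprime (g := g) hmonic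
  rwa [hdeg, resultant_C_mul_left, IsUnit.mul_iff, and_iff_right (u⁻¹.isUnit.pow _),
    isCoprime_mul_unit_left_left (isUnit_C.mpr u⁻¹.isUnit)] at hiff

theorem isUnit_resultant_iff_of_natDegree_le (hf : IsUnit f.leadingCoeff)
    (hg : g.natDegree ≤ n) :
    IsUnit (f.resultant g f.natDegree n) ↔ IsUnit (f.resultant g) := by
  obtain ⟨k, rfl⟩ := Nat.exists_eq_add_of_le hg
  rw [resultant_add_right_deg _ _ _ _ _ le_rfl, coeff_natDegree, IsUnit.mul_iff,
    and_iff_right (hf.pow k)]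

theorem existsUnique_mul_add_mul_of_isCoprime (hf : IsUnit f.leadingCoeff)
    (hg : g.natDegree ≤ n) (hfg : IsCoprime f g) {P : R[X]}
    (hP : P.degree < (f.natDegree + n : ℕ)) :
    ∃! AB : R[X] × R[X],
      AB.1.degree < n ∧ AB.2.degree < f.natDegree ∧ P = AB.1 * f + AB.2 * g :=
  existsUnique_mul_add_mul_of_isUnit_resultant le_rfl hg
    ((isUnit_resultant_iff_of_natDegree_le hf hg).mpr
      ((isUnit_resultant_iff_isCoprime_of_isUnit_leadingCoeff hf).mpr hfg)) hP

theorem stmt_9_general (d : ℕ) (hd : 1 ≤ d) (hdeg : f.natDegree = d)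
    (hlead : IsUnit f.leadingCoeff) (hcop : IsCoprime f (derivative f)) :
    ∀ P : R[X], P.degree ≤ (2 * d - 2 : ℕ) →
      ∃! AB : R[X] × R[X],
        AB.1.degree < (d - 1 : ℕ) ∧ AB.2.degree < (d : ℕ) ∧
          P = AB.1 * f + AB.2 * derivative f := by
  subst hdeg
  intro P hP
  have hlt : 2 * f.natDegree - 2 < f.natDegree + (f.natDegree - 1) := by lia
  exact existsUnique_mul_add_mul_of_isCoprime hlead (natDegree_derivative_le f) hcop
    (hP.trans_lt (by exact_mod_cast hlt))

end Sylvester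

/-- Let `K` be a field and `f ∈ K[X]` of degree `d ≥ 1` with `f` and `f'` coprime. Then every
polynomial `R` of degree at most `2d − 2` has a unique decomposition `R = A·f + B·f'` with
`deg A ≤ d − 2` (i.e. `deg A < d − 1`) and `deg B ≤ d − 1` (i.e. `deg B < d`). -/
theorem stmt_9 (K : Type*) [Field K] (f : Polynomial K) (d : ℕ) (hd : 1 ≤ d)
    (hdeg : f.natDegree = d) (hcop : IsCoprime f (Polynomial.derivative f)) :
    ∀ R : Polynomial K, R.degree ≤ (2 * d - 2 : ℕ) →
      ∃! AB : Polynomial K × Polynomial K,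
        AB.1.degree < (d - 1 : ℕ) ∧ AB.2.degree < (d : ℕ) ∧
          R = AB.1 * f + AB.2 * Polynomial.derivative f :=
  have hf : f ≠ 0 := Polynomial.ne_zero_of_natDegree_gt (n := 0) (by lia)
  stmt_9_general d hd hdeg (Polynomial.leadingCoeff_ne_zero.mpr hf).isUnit hcop
end

section
/- Let K be a field of characteristic zero, let f ∈ K[X] be monic of degree d ≥ 1, and let r and j be positive integers such that r divides j·d. Then there exists a unique monic polynomial B ∈ K[X] of degree j·d/r such that the polynomial j·B·f' − r·B'·f has degree at most d − 2 (where f' and B' denote formal derivatives). -/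
/-! For `f` of degree `d = e + 1` with leading coefficient `a`, the operator `B ↦ s B f' - r B' f`
raises degrees by at most `e` and multiplies the coefficient of `x ^ m` in a polynomial of degree
at most `m` by `a (s d - r m)`. If `r b = s d`, this factor is `a r (b - m)`: it vanishes for
`m = b`, and it is invertible for `m < b` as soon as `a`, `r` and `b!` are. Hence, starting from
`x ^ b`, the coefficients of `B` in degrees `b - 1, …, 0` are forced one after the other by the
vanishing of the coefficients of the image in degrees `b - 1 + e, …, e`.
-/

section

open Polynomial
open scoped Nat

variable {R : Type*}

lemma degree_lt_of_natDegree_le_of_coeff_eq_zero [Semiring R] {p : R[X]} {n : ℕ}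
    (hp : p.natDegree ≤ n) (hcoeff : p.coeff n = 0) : p.degree < n := by
  rw [degree_lt_iff_coeff_zero]
  intro k hk
  rcases hk.eq_or_lt with rfl | hlt
  · exact hcoeff
  · exact coeff_eq_zero_of_natDegree_lt (hp.trans_lt hlt)

lemma natDegree_derivative_mul_le [Semiring R] {f p : R[X]} {m e : ℕ}
    (hp : p.natDegree ≤ m) (hf : f.natDegree ≤ e + 1) :
    (derivative p * f).natDegree ≤ m + e := by
  cases m with
  | zero => simp [derivative_of_natDegree_zero (Nat.le_zero.mp hp)]
  | succ m =>
    have hp' : (derivative p).natDegree ≤ m :=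
      (natDegree_derivative_le p).trans (Nat.sub_le_of_le_add hp)
    exact (natDegree_mul_le_of_le hp' hf).trans_eq (by ring)

lemma coeff_derivative_mul_add [Semiring R] {f p : R[X]} {m e : ℕ}
    (hp : p.natDegree ≤ m) (hf : f.natDegree ≤ e + 1) :
    (derivative p * f).coeff (m + e) = p.coeff m * m * f.coeff (e + 1) := by
  cases m with
  | zero => simp [derivative_of_natDegree_zero (Nat.le_zero.mp hp)]
  | succ m =>
    have hp' : (derivative p).natDegree ≤ m :=
      (natDegree_derivative_le p).trans (Nat.sub_le_of_le_add hp)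
    rw [add_right_comm, add_assoc, coeff_mul_add_eq_of_natDegree_le hp' hf, coeff_derivative,
      Nat.cast_succ]

section DegreeSymbol

variable [Ring R]

/-- The linear operator `T` on polynomials raises degrees by at most `e`, with symbol `σ`: it sends
a polynomial `c x ^ m + (lower terms)` to `σ m c x ^ (m + e) + (lower terms)`. -/
def HasDegreeSymbol (T : R[X] →ₗ[R] R[X]) (e : ℕ) (σ : ℕ → R) : Prop :=
  ∀ ⦃p : R[X]⦄ ⦃m : ℕ⦄, p.natDegree ≤ m →
    (T p).natDegree ≤ m + e ∧ (T p).coeff (m + e) = σ m * p.coeff m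

variable {T : R[X] →ₗ[R] R[X]} {e : ℕ} {σ : ℕ → R} {b : ℕ}

lemma HasDegreeSymbol.eq_zero_of_degree_lt (hT : HasDegreeSymbol T e σ)
    (hσ : ∀ m < b, IsLeftRegular (σ m)) {p : R[X]} (hp : p.degree < b)
    (hTp : (T p).degree < e) : p = 0 := by
  by_contra hne
  have hpb : p.natDegree < b := (natDegree_lt_iff_degree_lt hne).mpr hp
  have hcoeff : σ p.natDegree * p.leadingCoeff = 0 :=
    (hT le_rfl).2.symm.trans (coeff_eq_zero_of_degree_lt (hTp.trans_le (mod_cast le_add_self)))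
  exact leadingCoeff_ne_zero.mpr hne (hσ _ hpb (hcoeff.trans (mul_zero _).symm))

lemma HasDegreeSymbol.exists_degree_sub_lt (hT : HasDegreeSymbol T e σ)
    (hσ : ∀ m < b, IsUnit (σ m)) {q : R[X]} (hq : q.degree < (b + e : ℕ)) :
    ∃ p : R[X], p.degree < b ∧ (q - T p).degree < e := by
  induction b generalizing q with
  | zero => exact ⟨0, by simp, by simpa using hq⟩
  | succ b ih =>
    obtain ⟨c, hc⟩ : σ b ∣ q.coeff (b + e) := (hσ b b.lt_succ_self).dvd
    obtain ⟨hdeg, hcoeff⟩ := hT (natDegree_monomial_le c (m := b))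
    have hq' : q.natDegree ≤ b + e :=
      natDegree_le_iff_coeff_eq_zero.mpr fun k hk ↦
        (degree_lt_iff_coeff_zero _ _).mp hq k (by omega)
    have hrest : (q - T (monomial b c)).degree < (b + e : ℕ) := by
      refine degree_lt_of_natDegree_le_of_coeff_eq_zero
        ((natDegree_sub_le_of_le hq' hdeg).trans_eq (max_self _)) ?_
      rw [coeff_sub, hcoeff, coeff_monomial_same, hc, sub_self]
    obtain ⟨p, hp, hTp⟩ := ih (fun m hm ↦ hσ m (hm.trans b.lt_succ_self)) hrest
    have hlt : (b : WithBot ℕ) < (b + 1 : ℕ) := mod_cast b.lt_succ_self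
    refine ⟨monomial b c + p, ?_, by rwa [map_add, ← sub_sub]⟩
    exact (degree_add_le _ _).trans_lt
      (max_lt ((degree_monomial_le b c).trans_lt hlt) (hp.trans hlt))

theorem HasDegreeSymbol.existsUnique_monic [Nontrivial R] (hT : HasDegreeSymbol T e σ)
    (hσ : ∀ m < b, IsUnit (σ m)) (hσb : σ b = 0) :
    ∃! B : R[X], B.Monic ∧ B.natDegree = b ∧ (T B).degree < e := by
  refine existsUnique_of_exists_of_unique ?_ ?_
  · obtain ⟨hdeg, hcoeff⟩ := hT (natDegree_X_pow_le (R := R) b)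
    have hlt : (T (X ^ b)).degree < (b + e : ℕ) :=
      degree_lt_of_natDegree_le_of_coeff_eq_zero hdeg (by rw [hcoeff, hσb, zero_mul])
    obtain ⟨p, hp, hTp⟩ := hT.exists_degree_sub_lt hσ hlt
    have hpX : p.degree < (X ^ b : R[X]).degree := by rwa [degree_X_pow]
    refine ⟨X ^ b - p, (monic_X_pow b).sub_of_left hpX, ?_, by rwa [map_sub]⟩
    rw [natDegree_eq_of_degree_eq (degree_sub_eq_left_of_degree_lt hpX), natDegree_X_pow]
  · rintro A B ⟨hA, hAdeg, hTA⟩ ⟨hB, hBdeg, hTB⟩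
    have hdegA : A.degree = b := by rw [degree_eq_natDegree hA.ne_zero, hAdeg]
    have hdegB : B.degree = b := by rw [degree_eq_natDegree hB.ne_zero, hBdeg]
    have hsub : (A - B).degree < b :=
      hdegA ▸ degree_sub_lt_left (hdegA.trans hdegB.symm) hA.ne_zero (hA.trans hB.symm)
    have hTsub : (T (A - B)).degree < e := by
      rw [map_sub]
      exact (degree_sub_le _ _).trans_lt (max_lt hTA hTB)
    exact sub_eq_zero.mp
      (hT.eq_zero_of_degree_lt (fun m hm ↦ (hσ m hm).isRegular.left) hsub hTsub)

end DegreeSymbol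

section WeightedWronskian

variable [CommRing R]

/-- The operator `B ↦ s B f' - r B' f`, a Wronskian of `B` and `f` with weights `s` and `r`. For
positive integers `r` and `s`, the differential of `B / y ^ s` on the curve `y ^ r = f(x)` is
`-(s B f' - r B' f) dx / (r y ^ (r + s))`. -/
noncomputable def weightedWronskian (r s : R) (f : R[X]) : R[X] →ₗ[R] R[X] :=
  s • LinearMap.mulRight R (derivative f) - r • LinearMap.mulRight R f ∘ₗ derivative

lemma weightedWronskian_apply (r s : R) (f p : R[X]) :
    weightedWronskian r s f p = C s * p * derivative f - C r * derivative p * f := by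
  simp [weightedWronskian, smul_eq_C_mul, mul_assoc]

lemma hasDegreeSymbol_weightedWronskian (r s : R) {f : R[X]} {e : ℕ}
    (hf : f.natDegree ≤ e + 1) :
    HasDegreeSymbol (weightedWronskian r s f) e
      fun m ↦ f.coeff (e + 1) * (s * (e + 1 : ℕ) - r * m) := by
  intro p m hp
  have hf' : (derivative f).natDegree ≤ e :=
    (natDegree_derivative_le f).trans (Nat.sub_le_of_le_add hf)
  rw [weightedWronskian_apply, mul_assoc, mul_assoc]
  constructor
  · exact (natDegree_sub_le_of_le
      ((natDegree_C_mul_le _ _).trans (natDegree_mul_le_of_le hp hf'))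
      ((natDegree_C_mul_le _ _).trans (natDegree_derivative_mul_le hp hf))).trans_eq (max_self _)
  · rw [coeff_sub, coeff_C_mul, coeff_C_mul, coeff_mul_add_eq_of_natDegree_le hp hf',
      coeff_derivative, coeff_derivative_mul_add hp hf]
    push_cast
    ring

end WeightedWronskian

lemma isUnit_natCast_sub_natCast [CommRing R] {b m : ℕ} (hb : IsUnit (b ! : R))
    (hm : m < b) : IsUnit ((b : R) - m) := by
  rw [← Nat.cast_sub hm.le]
  exact isUnit_of_dvd_unit
    (Nat.cast_dvd_cast (Nat.dvd_factorial (Nat.sub_pos_of_lt hm) (b.sub_le m))) hb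

theorem stmt_10_general [CommRing R] (f : R[X]) (d : ℕ) (hd : 1 ≤ d)
    (hf : IsUnit f.leadingCoeff) (hdeg : f.natDegree = d) (r s : R) (b : ℕ) (hr : IsUnit r)
    (hb : IsUnit (b ! : R)) (hrb : r * b = s * d) :
    ∃! B : R[X], B.Monic ∧ B.natDegree = b ∧
      (C s * B * derivative f - C r * derivative B * f).degree < (d - 1 : ℕ) := by
  obtain ⟨e, rfl⟩ := Nat.exists_eq_add_of_le' hd
  have hf0 : f ≠ 0 := ne_zero_of_natDegree_gt (hd.trans_eq hdeg.symm)
  have : Nontrivial R := .of_polynomial_ne hf0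
  have hlead : IsUnit (f.coeff (e + 1)) := hdeg ▸ hf
  have hsymbol := hasDegreeSymbol_weightedWronskian r s hdeg.le
  simp only [← hrb, ← mul_sub] at hsymbol
  simpa only [weightedWronskian_apply, Nat.add_sub_cancel] using hsymbol.existsUnique_monic
    (fun m hm ↦ hlead.mul (hr.mul (isUnit_natCast_sub_natCast hb hm))) (by simp)

end

/-- Let `K` be a field of characteristic zero, `f ∈ K[X]` monic of degree `d ≥ 1`, and `r, j`
positive integers with `r ∣ j·d`. Then there is a unique monic polynomial `B` of degree
`j·d/r` such that `j·B·f' − r·B'·f` has degree at most `d − 2` (i.e. degree `< d − 1`). -/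
theorem stmt_10 (K : Type*) [Field K] [CharZero K] (f : Polynomial K) (d : ℕ) (hd : 1 ≤ d)
    (hf : f.Monic) (hdeg : f.natDegree = d) (r j : ℕ) (hr : 0 < r) (hj : 0 < j)
    (hdvd : r ∣ j * d) :
    ∃! B : Polynomial K, B.Monic ∧ B.natDegree = j * d / r ∧
      ((j : Polynomial K) * B * Polynomial.derivative f
          - (r : Polynomial K) * Polynomial.derivative B * f).degree < (d - 1 : ℕ) := by
  simpa using stmt_10_general f d hd (hf ▸ isUnit_one) hdeg (r : K) j (j * d / r)
    (Nat.cast_ne_zero.mpr hr.ne').isUnit (Nat.cast_ne_zero.mpr (Nat.factorial_ne_zero _)).isUnit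
    (mod_cast Nat.mul_div_cancel' hdvd)
end

section
/- Let q, δ, e be positive integers with gcd(q, δ) = 1. For each positive divisor i of δ, let k_i denote the multiplicative order of q modulo i. Let V ∈ ℂ[t] be the polynomial V(t) = ∏_{i ∣ δ, i > 1} (t^{k_i} − 1)^{φ(i)/k_i}, where the product is over the positive divisors i of δ with i > 1 and φ is Euler's totient function (note k_i divides φ(i), so the exponents are integers). Then the sum of the e-th powers of the roots of V in ℂ, counted with multiplicity, equals gcd(δ, q^e − 1) − 1. -/
/-!
If `X ^ k - 1` splits, its roots have `e`-th power sum `k` if `k ∣ e` and `0` otherwise. Indeed, if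
some root `ζ` has `ζ ^ e ≠ 1`, then `z ↦ ζ * z` permutes the roots and multiplies the sum by
`ζ ^ e`. If there is no such root, the sum is `k`; when `k ≠ 0` in `R` the `k` roots are distinct
and all of them are roots of `X ^ gcd k e - 1`, so `k ∣ e`.

So the factor of `V` at `i` contributes `(φ i / k_i) * k_i = φ i` if `k_i ∣ e`, that is, if
`i ∣ q ^ e - 1`, and `0` otherwise. The `i` that contribute are the divisors `≠ 1` of
`gcd δ (q ^ e - 1)`, and the totients of all divisors of `n` add up to `n`.
-/

section PowerSums

open Polynomial

variable {R : Type*} [CommRing R] [IsDomain R]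

theorem sum_map_roots_prod_pow {ι M : Type*} [AddCommMonoid M] (s : Finset ι) (p : ι → R[X])
    (n : ι → ℕ) (hp : ∀ i ∈ s, p i ≠ 0) (f : R → M) :
    ((∏ i ∈ s, p i ^ n i).roots.map f).sum = ∑ i ∈ s, n i • ((p i).roots.map f).sum := by
  have hprod : ∏ i ∈ s, p i ^ n i ≠ 0 :=
    Finset.prod_ne_zero_iff.2 fun i hi => pow_ne_zero _ (hp i hi)
  rw [roots_prod _ _ hprod, Multiset.map_bind, Multiset.sum_bind]
  simp only [roots_pow, Multiset.map_nsmul, Multiset.sum_nsmul, Finset.sum]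

theorem nthRoots_one_map_mul_left {k : ℕ} {ζ : R} (hk : k ≠ 0) (hζ : ζ ^ k = 1) :
    (nthRoots k (1 : R)).map (ζ * ·) = nthRoots k 1 := by
  have hscale : (X ^ k - C 1 : R[X]).scaleRoots ζ = X ^ k - C 1 := by
    ext j
    rw [coeff_scaleRoots, natDegree_X_pow_sub_C, coeff_sub, coeff_X_pow, coeff_C]
    rcases eq_or_ne j k with rfl | hjk
    · simp
    · rcases eq_or_ne j 0 with rfl | hj <;> simp [*]
  rw [nthRoots, ← roots_scaleRoots _ (IsUnit.of_pow_eq_one hζ hk), hscale]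

theorem nodup_nthRoots_one {k : ℕ} (hk : (k : R) ≠ 0) : (nthRoots k (1 : R)).Nodup := by
  classical
  have hk₀ : k ≠ 0 := by rintro rfl; exact hk Nat.cast_zero
  have hne : (X ^ k - C 1 : R[X]) ≠ 0 := X_pow_sub_C_ne_zero (Nat.pos_of_ne_zero hk₀) 1
  refine Multiset.nodup_iff_count_le_one.2 fun z => ?_
  rw [nthRoots, count_roots]
  by_contra! hmult
  obtain ⟨hroot, hderiv⟩ := (one_lt_rootMultiplicity_iff_isRoot hne).1 hmult
  have hz : z ≠ 0 := by
    rintro rfl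
    simp [hk₀] at hroot
  have hderiv' : (k : R) * z ^ (k - 1) = 0 := by simpa [derivative_X_pow] using hderiv
  exact mul_ne_zero hk (pow_ne_zero _ hz) hderiv'

theorem dvd_of_forall_mem_nthRoots_one_pow_eq_one {k e : ℕ} (hk : (k : R) ≠ 0)
    (hcard : (nthRoots k (1 : R)).card = k) (h : ∀ z ∈ nthRoots k (1 : R), z ^ e = 1) :
    k ∣ e := by
  have hk₀ : 0 < k := Nat.pos_of_ne_zero (by rintro rfl; exact hk Nat.cast_zero)
  have hgcd : 0 < k.gcd e := Nat.gcd_pos_of_pos_left e hk₀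
  have hsub : nthRoots k (1 : R) ⊆ nthRoots (k.gcd e) 1 := fun z hz =>
    (mem_nthRoots hgcd).2 (pow_gcd_eq_one.2 ⟨(mem_nthRoots hk₀).1 hz, h z hz⟩)
  have hle : k ≤ k.gcd e :=
    calc k = (nthRoots k (1 : R)).card := hcard.symm
      _ ≤ (nthRoots (k.gcd e) (1 : R)).card :=
        Multiset.card_le_card ((Multiset.le_iff_subset (nodup_nthRoots_one hk)).2 hsub)
      _ ≤ k.gcd e := card_nthRoots _ _
  exact Nat.gcd_eq_left_iff_dvd.1 ((Nat.gcd_le_left e hk₀).antisymm hle)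

theorem sum_map_pow_roots_X_pow_sub_one {k : ℕ} (hsplits : (X ^ k - 1 : R[X]).Splits) (e : ℕ) :
    ((X ^ k - 1 : R[X]).roots.map (· ^ e)).sum = if k ∣ e then (k : R) else 0 := by
  rcases k.eq_zero_or_pos with rfl | hk
  · simp
  have hroots : (X ^ k - 1 : R[X]).roots = nthRoots k 1 := by rw [nthRoots, C_1]
  have hcard : (nthRoots k (1 : R)).card = k := by
    rw [← hroots, ← hsplits.natDegree_eq_card_roots, ← C_1, natDegree_X_pow_sub_C]
  rw [hroots]
  by_cases hall : ∀ z ∈ nthRoots k (1 : R), z ^ e = 1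
  · have hsum : ((nthRoots k (1 : R)).map (· ^ e)).sum = k := by
      rw [Multiset.map_congr rfl hall, Multiset.map_const', Multiset.sum_replicate, hcard,
        nsmul_one]
    rw [hsum]
    split_ifs with hdvd
    · rfl
    · by_contra hk'
      exact hdvd (dvd_of_forall_mem_nthRoots_one_pow_eq_one hk' hcard hall)
  · push Not at hall
    obtain ⟨ζ, hmem, hζe⟩ := hall
    have hζ : ζ ^ k = 1 := (mem_nthRoots hk).1 hmem
    have hdvd : ¬k ∣ e := by
      rintro ⟨c, rfl⟩
      exact hζe (by rw [pow_mul, hζ, one_pow])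
    have hinv : ζ ^ e * ((nthRoots k (1 : R)).map (· ^ e)).sum =
        ((nthRoots k (1 : R)).map (· ^ e)).sum := by
      conv_rhs => rw [← nthRoots_one_map_mul_left hk.ne' hζ]
      simp only [Multiset.map_map, Function.comp_def, mul_pow, Multiset.sum_map_mul_left]
    rw [if_neg hdvd]
    exact by_contra fun hsum => hζe ((mul_eq_right₀ hsum).1 hinv)

end PowerSums

section Arithmetic

theorem orderOf_natCast_zmod_dvd_totient {q i : ℕ} (h : q.Coprime i) :
    orderOf (q : ZMod i) ∣ i.totient := by
  rw [← ZMod.coe_unitOfCoprime q h, orderOf_units]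
  exact orderOf_dvd_of_pow_eq_one (ZMod.pow_totient _)

theorem orderOf_natCast_zmod_dvd_iff {q : ℕ} (hq : 0 < q) (i e : ℕ) :
    orderOf (q : ZMod i) ∣ e ↔ i ∣ q ^ e - 1 := by
  rw [orderOf_dvd_iff_pow_eq_one, ← ZMod.natCast_eq_zero_iff,
    Nat.cast_sub (Nat.one_le_pow _ _ hq), sub_eq_zero, Nat.cast_pow, Nat.cast_one]

theorem divisors_filter_dvd_eq_divisors_gcd {m : ℕ} (hm : m ≠ 0) (n : ℕ) :
    m.divisors.filter (· ∣ n) = (m.gcd n).divisors := by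
  ext i
  simp [Nat.dvd_gcd_iff, hm]

theorem sum_totient_one_lt_common_divisors_add_one {m : ℕ} (hm : m ≠ 0) (n : ℕ) :
    (∑ i ∈ m.divisors.filter (1 < ·), if i ∣ n then i.totient else 0) + 1 = m.gcd n := by
  have herase : m.divisors.filter (1 < ·) = m.divisors.erase 1 := by
    ext i
    have hpos : i ∈ m.divisors → 0 < i := Nat.pos_of_mem_divisors
    grind
  calc (∑ i ∈ m.divisors.filter (1 < ·), if i ∣ n then i.totient else 0) + 1
      = ∑ i ∈ m.divisors, if i ∣ n then i.totient else 0 := by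
        rw [herase, ← Finset.sum_erase_add _ _ (Nat.one_mem_divisors.2 hm)]
        simp
    _ = ∑ i ∈ (m.gcd n).divisors, i.totient := by
        rw [← Finset.sum_filter, divisors_filter_dvd_eq_divisors_gcd hm]
    _ = m.gcd n := Nat.sum_totient _

end Arithmetic

section TotientProduct

open Polynomial

variable {R : Type*} [CommRing R] [IsDomain R] {q : ℕ}

theorem totient_div_orderOf_nsmul_sum_map_pow_roots {i : ℕ} (hq : 0 < q) (hcop : q.Coprime i)
    (hsplits : (X ^ orderOf (q : ZMod i) - 1 : R[X]).Splits) (e : ℕ) :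
    (i.totient / orderOf (q : ZMod i)) •
        ((X ^ orderOf (q : ZMod i) - 1 : R[X]).roots.map (· ^ e)).sum =
      if i ∣ q ^ e - 1 then (i.totient : R) else 0 := by
  rw [sum_map_pow_roots_X_pow_sub_one hsplits, smul_ite, smul_zero, nsmul_eq_mul, ← Nat.cast_mul,
    Nat.div_mul_cancel (orderOf_natCast_zmod_dvd_totient hcop)]
  simp only [orderOf_natCast_zmod_dvd_iff hq]

theorem stmt_12_general {δ : ℕ} (hq : 0 < q) (hδ : 0 < δ) (hcop : q.Coprime δ) (e : ℕ) (V : R[X])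
    (hV : V = ∏ i ∈ δ.divisors.filter (fun i => 1 < i),
      (X ^ orderOf (q : ZMod i) - 1) ^ (i.totient / orderOf (q : ZMod i)))
    (hsplits : V.Splits) :
    (V.roots.map (fun z => z ^ e)).sum = (δ.gcd (q ^ e - 1) : R) - 1 := by
  set s := δ.divisors.filter (fun i => 1 < i)
  have htot (i) (hi : i ∈ s) : 0 < i.totient :=
    Nat.totient_pos.2 (zero_lt_one.trans (Finset.mem_filter.1 hi).2)
  have hcop_i (i) (hi : i ∈ s) : q.Coprime i :=
    hcop.coprime_dvd_right (Nat.dvd_of_mem_divisors (Finset.mem_filter.1 hi).1)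
  have hdvd (i) (hi : i ∈ s) := orderOf_natCast_zmod_dvd_totient (hcop_i i hi)
  have hne (i) (hi : i ∈ s) : (X ^ orderOf (q : ZMod i) - 1 : R[X]) ≠ 0 :=
    X_pow_sub_C_ne_zero (Nat.pos_of_dvd_of_pos (hdvd i hi) (htot i hi)) 1
  have hfactor (i) (hi : i ∈ s) : (X ^ orderOf (q : ZMod i) - 1 : R[X]).Splits := by
    have hV₀ : V ≠ 0 := hV ▸ Finset.prod_ne_zero_iff.2 fun j hj => pow_ne_zero _ (hne j hj)
    have hexp : i.totient / orderOf (q : ZMod i) ≠ 0 :=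
      (Nat.div_ne_zero_iff_of_dvd (hdvd i hi)).2
        ⟨(htot i hi).ne', (Nat.pos_of_dvd_of_pos (hdvd i hi) (htot i hi)).ne'⟩
    exact hsplits.of_dvd hV₀ (hV ▸ (dvd_pow_self _ hexp).trans (Finset.dvd_prod_of_mem _ hi))
  rw [hV, sum_map_roots_prod_pow _ _ _ hne, ← sum_totient_one_lt_common_divisors_add_one hδ.ne',
    Nat.cast_add, Nat.cast_one, add_sub_cancel_right, Nat.cast_sum]
  refine Finset.sum_congr rfl fun i hi => ?_
  rw [totient_div_orderOf_nsmul_sum_map_pow_roots hq (hcop_i i hi) (hfactor i hi), Nat.cast_ite,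
    Nat.cast_zero]

end TotientProduct

/-- Let `q, δ, e` be positive integers with `gcd(q, δ) = 1`, and for each divisor `i` of `δ`
let `k_i = orderOf (q : ZMod i)` be the multiplicative order of `q` modulo `i`. Let
`V(t) = ∏_{i ∣ δ, i > 1} (t^{k_i} − 1)^{φ(i)/k_i}` in `ℂ[t]`. Then the sum of the `e`-th
powers of the roots of `V` in `ℂ`, counted with multiplicity, equals `gcd(δ, q^e − 1) − 1`. -/
theorem stmt_12 (q δ e : ℕ) (hq : 0 < q) (hδ : 0 < δ) (he : 0 < e)
    (hcop : Nat.Coprime q δ) (V : Polynomial ℂ)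
    (hV : V = ∏ i ∈ δ.divisors.filter (fun i => 1 < i),
      (Polynomial.X ^ orderOf ((q : ZMod i)) - 1) ^ (Nat.totient i / orderOf ((q : ZMod i)))) :
    (V.roots.map (fun z => z ^ e)).sum = (Nat.gcd δ (q ^ e - 1) : ℂ) - 1 := by
  exact stmt_12_general hq hδ hcop e V hV (IsAlgClosed.splits V)
end

section
/- Let p be a prime and let r, k, j be natural numbers with r ≥ 1 and 1 ≤ j ≤ r. Then Nat.log p (k·r + j) ≤ k + Nat.log p r, where Nat.log p n denotes the floor of the base-p logarithm of n. -/
theorem natLog_pow_mul {b n : ℕ} (hb : 1 < b) (hn : n ≠ 0) (k : ℕ) :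
    Nat.log b (b ^ k * n) = k + Nat.log b n := by
  induction k with
  | zero => simp
  | succ k ih =>
    have hkn : b ^ k * n ≠ 0 := mul_ne_zero (pow_ne_zero k (by lia)) hn
    calc Nat.log b (b ^ (k + 1) * n)
        = Nat.log b (b ^ k * n * b) := by rw [pow_succ, mul_right_comm]
      _ = Nat.log b (b ^ k * n) + 1 := Nat.log_mul_base hb hkn
      _ = k + 1 + Nat.log b n := by rw [ih, add_right_comm]

theorem mul_add_le_pow_mul {b r j : ℕ} (hb : 1 < b) (hjr : j ≤ r) (k : ℕ) :
    k * r + j ≤ b ^ k * r :=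
  calc k * r + j
      ≤ k * r + r := by gcongr
    _ = (k + 1) * r := (Nat.succ_mul k r).symm
    _ ≤ b ^ k * r := Nat.mul_le_mul_right r (Nat.lt_pow_self hb)

theorem stmt_13_general {b r j : ℕ} (hb : 1 < b) (hr : 1 ≤ r) (hjr : j ≤ r) (k : ℕ) :
    Nat.log b (k * r + j) ≤ k + Nat.log b r :=
  calc Nat.log b (k * r + j)
      ≤ Nat.log b (b ^ k * r) := Nat.log_mono_right (mul_add_le_pow_mul hb hjr k)
    _ = k + Nat.log b r := natLog_pow_mul hb (Nat.one_le_iff_ne_zero.mp hr) k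

/-- Let `p` be a prime and let `r, k, j` be natural numbers with `r ≥ 1` and `1 ≤ j ≤ r`.
Then `Nat.log p (k·r + j) ≤ k + Nat.log p r`. -/
theorem stmt_13 (p : ℕ) (hp : p.Prime) (r k j : ℕ) (hr : 1 ≤ r)
    (hj1 : 1 ≤ j) (hjr : j ≤ r) :
    Nat.log p (k * r + j) ≤ k + Nat.log p r :=
  stmt_13_general hp.one_lt hr hjr k
end
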